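/- Let (D*_1, D*_2) be a random vector with the limiting bidegree distribution \bar f_2, under a power-law layer type distribution. Then as t → ∞, P(D*_1 = t) = (1 + o(1)) c' t^{−(α−2)/(1−β)}, where c' = a b^{(α−2)/(1−β)} (1−β)^{−1} P_{21}^{−1}. -/

import Mathlib

open MeasureTheory ProbabilityTheory Filter
open scoped ENNReal Topology Classical

noncomputable section

/-- The binomial probability mass function `Bin(x,y)(s)`. -/
def binP (x : ℕ) (y : ℝ) (s : ℕ) : ℝ := (x.choose s : ℝ) * y ^ s * (1 - y) ^ (x - s)

/-- Convolution of (mass) functions on `ℕ`. -/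
def conv (f g : ℕ → ℝ) (s : ℕ) : ℝ := ∑ i ∈ Finset.range (s + 1), f i * g (s - i)

/-- Iterated convolution power: `convPow f j` is the `j`-fold convolution of `f`. -/
def convPow (f : ℕ → ℝ) : ℕ → ℕ → ℝ
  | 0 => fun s => if s = 0 then 1 else 0
  | j + 1 => conv f (convPow f j)

/-- The compound Poisson probability mass function `CPoi(lam, f)`, i.e. the law of
`H_1 + ⋯ + H_Λ` where `Λ ~ Poi(lam)` and the `H_k` are i.i.d. with mass function `f`,
independent of `Λ`. -/
def cpoi (lam : ℝ) (f : ℕ → ℝ) (s : ℕ) : ℝ :=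
  ∑' j : ℕ, Real.exp (-lam) * lam ^ j / (j.factorial : ℝ) * convPow f j s

/-- Convolution of (mass) functions on `ℕ × ℕ`. -/
def conv2 (F G : ℕ → ℕ → ℝ) (s t : ℕ) : ℝ :=
  ∑ i ∈ Finset.range (s + 1), ∑ j ∈ Finset.range (t + 1), F i j * G (s - i) (t - j)

/-- Point mass at `(1,1)`, as a mass function on `ℕ × ℕ`. -/
def delta11 (s t : ℕ) : ℝ := if s = 1 ∧ t = 1 then 1 else 0

/-- The cross moment `P_{rs} = E[(X)_r Y^s]` for the layer type distribution
`P(dx,dy) = p(dx) δ_{q(x)}(dy)`. -/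
def mom (p q : ℕ → ℝ) (r s : ℕ) : ℝ :=
  ∑' x : ℕ, (x.descFactorial r : ℝ) * q x ^ s * p x

/-- The increment distribution `g(s) = ∫ Bin(x-1,y)(s) x P(dx,dy) / P₁₀` for
`P(dx,dy) = p(dx) δ_{q(x)}(dy)`. -/
def gInc (p q : ℕ → ℝ) (s : ℕ) : ℝ :=
  (∑' x : ℕ, (x : ℝ) * binP (x - 1) (q x) s * p x) / mom p q 1 0

/-- The limiting degree distribution `\bar f₁ = CPoi(μ P₁₀, g)`. -/
def barf1 (mu : ℝ) (p q : ℕ → ℝ) (s : ℕ) : ℝ :=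
  cpoi (mu * mom p q 1 0) (gInc p q) s

/-- The distribution `f₂'` of `(D₁', D₂')`:
`f₂'(s,t) = ∫ Bin(x-2,y)(s) Bin(x-2,y)(t) (x)₂ y P(dx,dy) / P₂₁` for
`P(dx,dy) = p(dx) δ_{q(x)}(dy)`. -/
def f2p (p q : ℕ → ℝ) (s t : ℕ) : ℝ :=
  (∑' x : ℕ, (x.descFactorial 2 : ℝ) * q x * binP (x - 2) (q x) s * binP (x - 2) (q x) t * p x) /
    mom p q 2 1

/-- The limiting bidegree distribution `\bar f₂ = δ₍₁,₁₎ ∗ (\bar f₁ ⊗ \bar f₁) ∗ f₂'`,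
i.e. the joint law of `(D₁*, D₂*) = (1 + D₁ + D₁', 1 + D₂ + D₂')` where `D₁`, `D₂`,
`(D₁', D₂')` are mutually independent, `D₁, D₂ ~ \bar f₁` and `(D₁', D₂') ~ f₂'`. -/
def barf2 (mu : ℝ) (p q : ℕ → ℝ) : ℕ → ℕ → ℝ :=
  conv2 (conv2 delta11 fun s t => barf1 mu p q s * barf1 mu p q t) (f2p p q)

/-- `δ_t = t^{1/2} ln⁴(2+t)`. -/
def deltaFn (t : ℕ) : ℝ := Real.sqrt t * Real.log (2 + (t : ℝ)) ^ (4 : ℕ)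


/-! ### Binomial facts -/

lemma binP_nonneg (n : ℕ) {y : ℝ} (h0 : 0 ≤ y) (h1 : y ≤ 1) (s : ℕ) : 0 ≤ binP n y s := by
  unfold binP
  have : 0 ≤ 1 - y := by linarith
  positivity

lemma binP_eq_zero {n s : ℕ} (y : ℝ) (h : n < s) : binP n y s = 0 := by
  simp [binP, Nat.choose_eq_zero_of_lt h]

lemma binP_mgf (n : ℕ) (y z : ℝ) :
    ∑ s ∈ Finset.range (n + 1), binP n y s * z ^ s = (1 + y * (z - 1)) ^ n := by
  have : 1 + y * (z - 1) = y * z + (1 - y) := by ring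
  rw [this, add_pow]
  refine Finset.sum_congr rfl fun s _ => ?_
  unfold binP
  rw [mul_pow]; ring

lemma binP_sum (n : ℕ) (y : ℝ) : ∑ s ∈ Finset.range (n + 1), binP n y s = 1 := by
  simpa using binP_mgf n y 1

lemma binP_hasSum (n : ℕ) (y : ℝ) : HasSum (fun s => binP n y s) 1 := by
  rw [← binP_sum n y]
  apply hasSum_sum_of_ne_finset_zero
  intro s hs
  apply binP_eq_zero
  simpa [Nat.lt_succ_iff] using hs

lemma binP_mgf_hasSum (n : ℕ) (y z : ℝ) :
    HasSum (fun s => binP n y s * z ^ s) ((1 + y * (z - 1)) ^ n) := by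
  rw [← binP_mgf n y z]
  apply hasSum_sum_of_ne_finset_zero
  intro s hs
  rw [binP_eq_zero y (by simpa [Nat.lt_succ_iff] using hs), zero_mul]

lemma binP_le_one (n : ℕ) {y : ℝ} (h0 : 0 ≤ y) (h1 : y ≤ 1) (s : ℕ) : binP n y s ≤ 1 :=
  le_hasSum (binP_hasSum n y) s fun j _ => binP_nonneg n h0 h1 j

/-- binomial distribution function -/
def PhiB (n : ℕ) (y : ℝ) (t : ℕ) : ℝ := ∑ s ∈ Finset.range (t + 1), binP n y s

lemma PhiB_le_one (n : ℕ) {y : ℝ} (h0 : 0 ≤ y) (h1 : y ≤ 1) (t : ℕ) : PhiB n y t ≤ 1 :=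
  sum_le_hasSum _ (fun j _ => binP_nonneg n h0 h1 j) (binP_hasSum n y)

lemma PhiB_nonneg (n : ℕ) {y : ℝ} (h0 : 0 ≤ y) (h1 : y ≤ 1) (t : ℕ) : 0 ≤ PhiB n y t :=
  Finset.sum_nonneg (fun j _ => binP_nonneg n h0 h1 j)

lemma binP_le_PhiB (n : ℕ) {y : ℝ} (h0 : 0 ≤ y) (h1 : y ≤ 1) (t : ℕ) :
    binP n y t ≤ PhiB n y t :=
  Finset.single_le_sum (f := fun s => binP n y s) (fun j _ => binP_nonneg n h0 h1 j)
    (Finset.mem_range.2 (Nat.lt_succ_self t))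

lemma mgf_le_exp (n : ℕ) {y z : ℝ} (h0 : 0 ≤ y) (h1 : y ≤ 1) (hz : 0 ≤ z) :
    (1 + y * (z - 1)) ^ n ≤ Real.exp (n * y * (z - 1)) := by
  have h : 1 + y * (z - 1) ≤ Real.exp (y * (z - 1)) := by
    have := Real.add_one_le_exp (y * (z - 1)); linarith
  have h2 : 0 ≤ 1 + y * (z - 1) := by nlinarith
  calc _ ≤ (Real.exp (y * (z - 1))) ^ n := pow_le_pow_left₀ h2 h n
    _ = _ := by rw [← Real.exp_nat_mul]; ring_nf

/-- Chernoff, lower tail -/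
lemma chern_Phi (n : ℕ) {y z : ℝ} (h0 : 0 ≤ y) (h1 : y ≤ 1) (hz : 0 ≤ z) (hz1 : z ≤ 1) (t : ℕ) :
    PhiB n y t * z ^ t ≤ Real.exp (n * y * (z - 1)) := by
  refine le_trans ?_ (mgf_le_exp n h0 h1 hz)
  refine le_trans ?_ (sum_le_hasSum (Finset.range (t + 1)) (fun j _ =>
    mul_nonneg (binP_nonneg n h0 h1 j) (pow_nonneg hz j)) (binP_mgf_hasSum n y z))
  unfold PhiB
  rw [Finset.sum_mul]
  refine Finset.sum_le_sum fun s hs => ?_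
  refine mul_le_mul_of_nonneg_left ?_ (binP_nonneg n h0 h1 s)
  exact pow_le_pow_of_le_one hz hz1 (by simpa [Nat.lt_succ_iff] using hs)

/-- Chernoff, pointwise -/
lemma chern_pt (n : ℕ) {y z : ℝ} (h0 : 0 ≤ y) (h1 : y ≤ 1) (hz : 0 ≤ z) (t : ℕ) :
    binP n y t * z ^ t ≤ Real.exp (n * y * (z - 1)) := by
  refine le_trans ?_ (mgf_le_exp n h0 h1 hz)
  exact le_hasSum (binP_mgf_hasSum n y z) t fun j _ =>
    mul_nonneg (binP_nonneg n h0 h1 j) (pow_nonneg hz j)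

/-- Chernoff, upper tail -/
lemma chern_upper (n : ℕ) {y z : ℝ} (h0 : 0 ≤ y) (h1 : y ≤ 1) (hz1 : 1 ≤ z) (t : ℕ) :
    (1 - PhiB n y t) * z ^ t ≤ Real.exp (n * y * (z - 1)) := by
  have hz : 0 ≤ z := by linarith
  refine le_trans ?_ (mgf_le_exp n h0 h1 hz)
  have e1 : HasSum (fun s => binP n y s * z ^ t) (1 * z ^ t) := (binP_hasSum n y).mul_right _
  have e2 := (e1.summable.hasSum_iff_tendsto_nat).1 e1
  have h3 := (binP_mgf_hasSum n y z)
  have h4 : Summable (fun s => binP n y s * z ^ s) := h3.summable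
  have h5 := h4.sum_add_tsum_nat_add (t + 1)
  have h6 := e1.summable.sum_add_tsum_nat_add (t + 1)
  rw [h3.tsum_eq] at h5
  rw [e1.tsum_eq] at h6
  have h7 : ∑' i, binP n y (i + (t + 1)) * z ^ t ≤ ∑' i, binP n y (i + (t + 1)) * z ^ (i + (t + 1)) := by
    refine Summable.tsum_le_tsum (fun i => ?_) ((summable_nat_add_iff (f := fun s => binP n y s * z ^ t) (t + 1)).2 e1.summable)
      ((summable_nat_add_iff (f := fun s => binP n y s * z ^ s) (t + 1)).2 h4)
    refine mul_le_mul_of_nonneg_left ?_ (binP_nonneg n h0 h1 _)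
    exact pow_le_pow_right₀ hz1 (by omega)
  have h8 : 0 ≤ ∑ i ∈ Finset.range (t + 1), binP n y i * z ^ i :=
    Finset.sum_nonneg fun j _ => mul_nonneg (binP_nonneg n h0 h1 j) (pow_nonneg hz j)
  rw [← Finset.sum_mul] at h6
  unfold PhiB
  nlinarith

lemma binP_eq_bern (n : ℕ) (y : ℝ) (s : ℕ) : binP n y s = (bernsteinPolynomial ℝ n s).eval y := by
  simp [binP, bernsteinPolynomial]

lemma PhiB_hasDerivAt (n t : ℕ) (y : ℝ) :
    HasDerivAt (fun y => PhiB (n + 1) y t) (-((n + 1 : ℝ) * binP n y t)) y := by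
  have h0 : ∀ s, HasDerivAt (fun y => binP (n + 1) y s)
      ((Polynomial.derivative (bernsteinPolynomial ℝ (n + 1) s)).eval y) y := by
    intro s
    simp only [binP_eq_bern]
    exact Polynomial.hasDerivAt _ _
  induction t with
  | zero =>
    have := h0 0
    rw [bernsteinPolynomial.derivative_zero] at this
    have h2 := this.congr_deriv (g' := -((n + 1 : ℝ) * binP n y 0)) (by
      simp [binP_eq_bern]; ring)
    simpa [PhiB] using h2
  | succ t ih =>
    have h1 := ih.add (h0 (t + 1))
    have e : (fun y => PhiB (n + 1) y (t + 1)) =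
        (fun y => PhiB (n + 1) y t) + fun y => binP (n + 1) y (t + 1) := by
      funext y; simp [PhiB, Finset.sum_range_succ]
    rw [e]
    refine h1.congr_deriv ?_
    rw [bernsteinPolynomial.derivative_succ]
    simp [binP_eq_bern]
    ring

lemma binP_succ_succ (n : ℕ) (y : ℝ) (s : ℕ) :
    binP (n + 1) y (s + 1) = y * binP n y s + (1 - y) * binP n y (s + 1) := by
  unfold binP
  rcases lt_trichotomy s n with h | h | h
  · obtain ⟨k, rfl⟩ := Nat.exists_eq_add_of_lt h
    rw [Nat.choose_succ_succ, show s + k + 1 + 1 - (s + 1) = k + 1 by omega,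
      show s + k + 1 - s = k + 1 by omega, show s + k + 1 - (s + 1) = k by omega]
    push_cast; ring
  · subst h; simp; ring
  · rw [Nat.choose_eq_zero_of_lt h, Nat.choose_eq_zero_of_lt (by omega : n + 1 < s + 1),
      Nat.choose_eq_zero_of_lt (by omega : n < s + 1)]; simp

lemma PhiB_sub_succ (n t : ℕ) (y : ℝ) : PhiB n y t - PhiB (n + 1) y t = y * binP n y t := by
  induction t with
  | zero => simp [PhiB, binP]; ring
  | succ t ih =>
    have e : ∀ n, PhiB n y (t + 1) = PhiB n y t + binP n y (t + 1) := by
      intro n; simp [PhiB, Finset.sum_range_succ]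
    rw [e, e, binP_succ_succ]; linarith

/-! ### the functions Q and m -/

def Qf (b β : ℝ) (n : ℕ) : ℝ := min 1 (b * ((n : ℝ) + 2) ^ (-β))
def mf (b β : ℝ) (n : ℕ) : ℝ := b * ((n : ℝ) + 2) ^ (1 - β)

lemma Qf_pos {b : ℝ} (hb : 0 < b) (β : ℝ) (n : ℕ) : 0 < Qf b β n := by
  unfold Qf; exact lt_min one_pos (by positivity)

lemma Qf_le_one (b β : ℝ) (n : ℕ) : Qf b β n ≤ 1 := min_le_left _ _

lemma mf_pos {b : ℝ} (hb : 0 < b) (β : ℝ) (n : ℕ) : 0 < mf b β n := by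
  unfold mf; positivity

lemma mf_eq (b β : ℝ) (n : ℕ) : mf b β n = ((n : ℝ) + 2) * (b * ((n : ℝ) + 2) ^ (-β)) := by
  unfold mf
  rw [sub_eq_add_neg, Real.rpow_add (by positivity), Real.rpow_one]; ring

lemma nQ_le_mf {b : ℝ} (hb : 0 < b) (β : ℝ) (n : ℕ) : n * Qf b β n ≤ mf b β n := by
  rw [mf_eq]
  have h1 : Qf b β n ≤ b * ((n : ℝ) + 2) ^ (-β) := min_le_right _ _
  have h2 := (Qf_pos hb β n)
  have : (0 : ℝ) ≤ n := by positivity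
  nlinarith

lemma tendsto_n2 : Tendsto (fun n : ℕ => (n : ℝ) + 2) atTop atTop :=
  tendsto_atTop_add_const_right _ _ tendsto_natCast_atTop_atTop

lemma tendsto_bQ {b β : ℝ} (hβ : 0 < β) :
    Tendsto (fun n : ℕ => b * ((n : ℝ) + 2) ^ (-β)) atTop (𝓝 0) := by
  have := ((tendsto_rpow_neg_atTop hβ).comp tendsto_n2).const_mul b
  simpa using this

lemma Qf_eventually {b β : ℝ} (hβ0 : 0 ≤ β) (hb1 : β = 0 → b < 1) :
    ∀ᶠ n : ℕ in atTop, Qf b β n = b * ((n : ℝ) + 2) ^ (-β) ∧ Qf b β n < 1 := by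
  have : ∀ᶠ n : ℕ in atTop, b * ((n : ℝ) + 2) ^ (-β) < 1 := by
    rcases hβ0.eq_or_lt with h | h
    · subst h; simp [hb1 rfl]
    · exact (tendsto_bQ h).eventually_lt_const one_pos
  filter_upwards [this] with n hn
  have : Qf b β n = b * ((n : ℝ) + 2) ^ (-β) := min_eq_right hn.le
  exact ⟨this, this ▸ hn⟩

lemma mf_mono {b β : ℝ} (hb : 0 < b) (hβ1 : β < 1) : Monotone (mf b β) := by
  intro i j hij
  unfold mf
  have : (i : ℝ) ≤ j := by exact_mod_cast hij
  gcongr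

lemma mf_tendsto {b β : ℝ} (hb : 0 < b) (hβ1 : β < 1) : Tendsto (mf b β) atTop atTop :=
  ((tendsto_rpow_atTop (by linarith : 0 < 1 - β)).comp tendsto_n2).const_mul_atTop hb

lemma mf_succ_le {b β : ℝ} (hb : 0 < b) (hβ0 : 0 ≤ β) (n : ℕ) :
    mf b β (n + 1) ≤ mf b β n * (1 + 1 / ((n : ℝ) + 2)) := by
  rw [mf_eq, mf_eq]
  have h : (((n + 1 : ℕ) : ℝ) + 2) ^ (-β) ≤ ((n : ℝ) + 2) ^ (-β) :=
    Real.rpow_le_rpow_of_nonpos (by positivity) (by push_cast; linarith) (by linarith)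
  calc (((n + 1 : ℕ) : ℝ) + 2) * (b * (((n + 1 : ℕ) : ℝ) + 2) ^ (-β))
      ≤ (((n + 1 : ℕ) : ℝ) + 2) * (b * ((n : ℝ) + 2) ^ (-β)) := by gcongr
    _ = _ := by push_cast; field_simp; ring

/-- relative decrement -/
def kap (b β : ℝ) (n : ℕ) : ℝ := ((n : ℝ) + 1) * (Qf b β n - Qf b β (n + 1)) / Qf b β n

lemma kap_tendsto {b β : ℝ} (hb : 0 < b) (hβ : 0 < β) : Tendsto (kap b β) atTop (𝓝 β) := by
  have hd : HasDerivAt (fun u : ℝ => -(u ^ (-β))) β 1 := by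
    have := (Real.hasDerivAt_rpow_const (x := 1) (p := -β) (Or.inl one_ne_zero)).fun_neg
    simpa using this
  have hs := hd.tendsto_slope
  have hu : Tendsto (fun n : ℕ => 1 + 1 / ((n : ℝ) + 2)) atTop (𝓝[≠] 1) := by
    refine tendsto_nhdsWithin_iff.2 ⟨?_, Eventually.of_forall fun n => ?_⟩
    · have := tendsto_n2.inv_tendsto_atTop.const_add 1
      simpa using this
    · have : (0 : ℝ) < 1 / ((n : ℝ) + 2) := by positivity
      simp; positivity
  have h1 := hs.comp hu
  have h2 : Tendsto (fun n : ℕ => ((n : ℝ) + 1) / ((n : ℝ) + 2)) atTop (𝓝 1) := by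
    have := (tendsto_n2.inv_tendsto_atTop).const_sub 1
    rw [sub_zero] at this
    refine this.congr fun n => ?_
    simp; field_simp; ring
  have h3 := h1.mul h2
  rw [mul_one] at h3
  have hev := Qf_eventually (b := b) hβ.le (fun h => absurd h hβ.ne')
  refine h3.congr' ?_
  filter_upwards [hev, (tendsto_add_atTop_nat 1).eventually hev] with n h h'
  unfold kap
  rw [h.1, h'.1]
  simp only [Function.comp, slope, vsub_eq_sub, smul_eq_mul, add_sub_cancel_left]
  have e : (((n + 1 : ℕ) : ℝ) + 2) = ((n : ℝ) + 2) * (1 + 1 / ((n : ℝ) + 2)) := by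
    push_cast; field_simp; ring
  rw [e, Real.mul_rpow (by positivity) (by positivity)]
  have : ((n : ℝ) + 2) ^ (-β) ≠ 0 := by positivity
  simp only [Real.one_rpow]
  field_simp
  ring

lemma mf_div_tendsto {b β : ℝ} (hβ : 0 < β) :
    Tendsto (fun n : ℕ => mf b β n / ((n : ℝ) + 1)) atTop (𝓝 0) := by
  have h2 : Tendsto (fun n : ℕ => ((n : ℝ) + 2) / ((n : ℝ) + 1)) atTop (𝓝 1) := by
    have := (tendsto_atTop_add_const_right _ (1 : ℝ)
      tendsto_natCast_atTop_atTop).inv_tendsto_atTop.const_add (1 : ℝ)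
    rw [add_zero] at this
    refine this.congr fun n => ?_
    simp; field_simp; ring
  have := h2.mul (tendsto_bQ (b := b) hβ)
  rw [one_mul] at this
  refine this.congr fun n => ?_
  rw [mf_eq]; ring

lemma ratio_lower (n t : ℕ) {r Q : ℝ} (hr : 0 < r) (hrQ : r ≤ Q) (hQ : Q < 1) :
    binP n Q t * (1 - t * (1 - r / Q)) ≤ binP n r t := by
  have hQ0 : 0 < Q := hr.trans_le hrQ
  have hB := binP_nonneg n hQ0.le hQ.le t
  have h1 : 1 - t * (1 - r / Q) ≤ (r / Q) ^ t := by
    have := one_add_mul_le_pow (a := r / Q - 1) (by have : 0 < r / Q := by positivity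
                                                    linarith) t
    have e : 1 + (r / Q - 1) = r / Q := by ring
    rw [e] at this; linarith
  calc _ ≤ binP n Q t * (r / Q) ^ t := by gcongr
    _ = (n.choose t : ℝ) * r ^ t * (1 - Q) ^ (n - t) := by
      unfold binP; rw [div_pow]; field_simp
    _ ≤ _ := by
      unfold binP
      have : 0 ≤ 1 - Q := by linarith
      gcongr

lemma ratio_upper (n t : ℕ) {r Q Q' : ℝ} (hr : 0 < r) (hQ' : Q' ≤ r) (hrQ : r ≤ Q) (hQ : Q < 1) :
    binP n r t ≤ binP n Q t * Real.exp (n * (Q - Q') / (1 - Q)) := by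
  have hQ0 : 0 < Q := hr.trans_le hrQ
  have h1Q : 0 < 1 - Q := by linarith
  have h1 : (1 - r) ≤ (1 - Q) * Real.exp ((Q - Q') / (1 - Q)) := by
    have := Real.add_one_le_exp ((Q - Q') / (1 - Q))
    have h2 : (1 - Q) * ((Q - Q') / (1 - Q) + 1) ≤ (1 - Q) * Real.exp ((Q - Q') / (1 - Q)) := by
      gcongr
    have h3 : (1 - Q) * ((Q - Q') / (1 - Q) + 1) = 1 - Q' := by field_simp; ring
    linarith
  have h2 : (1 - r) ^ (n - t) ≤ (1 - Q) ^ (n - t) * Real.exp (n * (Q - Q') / (1 - Q)) := by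
    calc (1 - r) ^ (n - t) ≤ ((1 - Q) * Real.exp ((Q - Q') / (1 - Q))) ^ (n - t) :=
          pow_le_pow_left₀ (by linarith) h1 _
      _ = (1 - Q) ^ (n - t) * Real.exp (((n - t : ℕ) : ℝ) * ((Q - Q') / (1 - Q))) := by
          rw [mul_pow, ← Real.exp_nat_mul]
      _ ≤ _ := by
          have h5 : ((n - t : ℕ) : ℝ) ≤ n := by exact_mod_cast Nat.sub_le n t
          have h6 : 0 ≤ (Q - Q') / (1 - Q) := div_nonneg (by linarith) h1Q.le
          rw [mul_div_assoc]
          gcongr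
  unfold binP
  calc _ ≤ (n.choose t : ℝ) * Q ^ t * ((1 - Q) ^ (n - t) * Real.exp (n * (Q - Q') / (1 - Q))) := by
        have : 0 ≤ (1 - r) ^ (n - t) := pow_nonneg (by linarith) _
        gcongr
    _ = _ := by ring

/-- telescoping increment -/
def Dinc (b β : ℝ) (t n : ℕ) : ℝ := PhiB n (Qf b β n) t - PhiB (n + 1) (Qf b β (n + 1)) t

lemma incr {b β : ℝ} (hb : 0 < b) (hβ0 : 0 ≤ β) (hβ1 : β < 1) (hb1 : β = 0 → b < 1)
    {ε : ℝ} (hε : 0 < ε) :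
    ∀ᶠ n : ℕ in atTop, ∀ t : ℕ, (t : ℝ) ≤ 2 * mf b β n →
      |Dinc b β t n - (1 - β) * (Qf b β n * binP n (Qf b β n) t)|
        ≤ ε * (Qf b β n * binP n (Qf b β n) t) := by
  rcases hβ0.eq_or_lt with h | hβ
  · subst h
    refine Eventually.of_forall fun n t _ => ?_
    have hQ : Qf b 0 (n + 1) = Qf b 0 n := by simp [Qf]
    have : Dinc b 0 t n = Qf b 0 n * binP n (Qf b 0 n) t := by
      unfold Dinc; rw [hQ, PhiB_sub_succ]
    rw [this]
    have hB := mul_nonneg (Qf_pos hb 0 n).le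
      (binP_nonneg n (Qf_pos hb 0 n).le (Qf_le_one b 0 n) t)
    simp
    positivity
  · have hk := kap_tendsto hb hβ
    have hev := Qf_eventually (b := b) hβ.le (fun h => absurd h hβ.ne')
    have hQ0 : Tendsto (Qf b β) atTop (𝓝 0) :=
      (tendsto_bQ hβ).congr' (hev.mono fun n h => h.1.symm)
    have e1 : ∀ᶠ n in atTop, |kap b β n - β| < ε / 2 := by
      have := Metric.tendsto_nhds.1 hk (ε / 2) (by positivity)
      simpa [Real.dist_eq] using this
    have e2 : ∀ᶠ n in atTop, kap b β n < 2 := hk.eventually_lt_const (by linarith)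
    have e3 : ∀ᶠ n in atTop, 2 * (mf b β n / ((n : ℝ) + 1)) * kap b β n < ε / 4 := by
      have := ((mf_div_tendsto (b := b) hβ).const_mul 2).mul hk
      refine this.eventually_lt_const ?_
      simp; positivity
    have e4 : ∀ᶠ n in atTop, Real.exp (kap b β n * Qf b β n / (1 - Qf b β n)) < 1 + ε / 4 := by
      have := (Real.continuous_exp.tendsto _).comp
        ((hk.mul hQ0).div (hQ0.const_sub 1) (by norm_num))
      refine this.eventually_lt_const ?_
      simp; positivity
    filter_upwards [e1, e2, e3, e4, hev, (tendsto_add_atTop_nat 1).eventually hev] with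
      n e1 e2 e3 e4 h h' t ht
    have hlt : Qf b β (n + 1) < Qf b β n := by
      rw [h.1, h'.1]
      refine mul_lt_mul_of_pos_left ?_ hb
      exact Real.rpow_lt_rpow_of_neg (by positivity) (by push_cast; linarith) (by linarith)
    have hQpos := Qf_pos hb β n
    have hQ'pos := Qf_pos hb β (n + 1)
    have hQ1 := h.2
    have hkd : kap b β n = ((n : ℝ) + 1) * (Qf b β n - Qf b β (n + 1)) / Qf b β n := rfl
    unfold Dinc
    generalize Qf b β n = Q at *
    generalize Qf b β (n + 1) = Q' at *
    generalize kap b β n = k at *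
    obtain ⟨r, hr, hre⟩ := exists_hasDerivAt_eq_slope (fun y => PhiB (n + 1) y t)
      (fun y => -((n + 1 : ℝ) * binP n y t)) hlt
      (fun y _ => (PhiB_hasDerivAt n t y).continuousAt.continuousWithinAt)
      (fun y _ => PhiB_hasDerivAt n t y)
    rw [eq_div_iff (by linarith)] at hre
    have hkQ : k * Q = ((n : ℝ) + 1) * (Q - Q') := by rw [hkd]; field_simp
    have hr0 : 0 < r := hQ'pos.trans hr.1
    have hB := binP_nonneg n hQpos.le hQ1.le t
    have hlow := ratio_lower n t hr0 hr.2.le hQ1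
    have hup := ratio_upper n t hr0 hr.1.le hr.2.le hQ1
    have hk0 : 0 ≤ k := by
      rw [hkd]; exact div_nonneg (mul_nonneg (by positivity) (by linarith)) hQpos.le
    have hD : PhiB n Q t - PhiB (n + 1) Q' t = Q * binP n Q t - k * Q * binP n r t := by
      have := PhiB_sub_succ n t Q
      rw [hkQ]; linarith
    have hn0 : (0 : ℝ) ≤ n := by positivity
    have hup' : binP n r t ≤ binP n Q t * (1 + ε / 4) := by
      refine hup.trans (mul_le_mul_of_nonneg_left (le_trans ?_ e4.le) hB)
      refine Real.exp_le_exp.2 ?_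
      refine div_le_div_of_nonneg_right ?_ (by linarith)
      rw [hkQ]; nlinarith
    have hlow' : binP n Q t * (1 - ε / 4) ≤ binP n r t := by
      refine le_trans (mul_le_mul_of_nonneg_left ?_ hB) hlow
      have h1 : 1 - r / Q ≤ k / ((n : ℝ) + 1) := by
        rw [hkd, show ((n : ℝ) + 1) * (Q - Q') / Q / ((n : ℝ) + 1) = 1 - Q' / Q by field_simp]
        have := div_le_div_of_nonneg_right hr.1.le hQpos.le
        linarith
      have h2 : (t : ℝ) * (1 - r / Q) ≤ 2 * mf b β n * (k / ((n : ℝ) + 1)) := by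
        refine mul_le_mul ht h1 ?_ (by have := mf_pos hb β n; positivity)
        have := div_le_one_of_le₀ hr.2.le hQpos.le
        linarith
      have h3 : 2 * mf b β n * (k / ((n : ℝ) + 1)) = 2 * (mf b β n / ((n : ℝ) + 1)) * k := by ring
      linarith
    rw [hD]
    have hab : |k * (binP n Q t - binP n r t)| ≤ 2 * (ε / 4 * binP n Q t) := by
      rw [abs_mul, abs_of_nonneg hk0]
      refine mul_le_mul e2.le (abs_le.2 ⟨by linarith, by linarith⟩) (abs_nonneg _) (by norm_num)
    have hab2 : |(k - β) * binP n Q t| ≤ ε / 2 * binP n Q t := by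
      rw [abs_mul, abs_of_nonneg hB]; gcongr
    have : Q * binP n Q t - k * Q * binP n r t - (1 - β) * (Q * binP n Q t) =
        Q * (k * (binP n Q t - binP n r t) - (k - β) * binP n Q t) := by ring
    rw [this, abs_mul, abs_of_pos hQpos]
    calc _ ≤ Q * (|k * (binP n Q t - binP n r t)| + |(k - β) * binP n Q t|) := by
          gcongr; exact abs_sub _ _
      _ ≤ Q * (2 * (ε / 4 * binP n Q t) + ε / 2 * binP n Q t) := by gcongr
      _ = _ := by ring

/-! ### tails -/

lemma lower_tail {b β : ℝ} (hb : 0 < b) {ε : ℝ} (hε : 0 < ε) (hε1 : ε < 1) :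
    ∃ c : ℝ, 0 < c ∧ ∀ n t : ℕ, mf b β n ≤ (1 - ε) * t →
      binP n (Qf b β n) t ≤ Real.exp (-c * (t + mf b β n)) ∧
      1 - PhiB n (Qf b β n) t ≤ Real.exp (-c * (t + mf b β n)) := by
  have hc : 0 < ε / (1 + ε) - (1 - ε) * ε := by
    have : ε / (1 + ε) - (1 - ε) * ε = ε ^ 3 / (1 + ε) := by field_simp; ring
    rw [this]; positivity
  refine ⟨(ε / (1 + ε) - (1 - ε) * ε) / 2, by positivity, fun n t h => ?_⟩
  set c := ε / (1 + ε) - (1 - ε) * ε with hcd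
  have h0 := (Qf_pos hb β n).le
  have h1 := Qf_le_one b β n
  have hnQ := nQ_le_mf hb β n
  have ht0 : (0 : ℝ) ≤ t := by positivity
  have key : ∀ X : ℝ, X * (1 + ε) ^ t ≤ Real.exp (n * Qf b β n * ((1 + ε) - 1)) →
      X ≤ Real.exp (-(c / 2) * (t + mf b β n)) := by
    intro X hX
    have hz : Real.exp (ε / (1 + ε)) ≤ 1 + ε := by
      have := Real.one_sub_inv_le_log_of_pos (by linarith : 0 < 1 + ε)
      rw [← Real.le_log_iff_exp_le (by linarith)]
      have e : ε / (1 + ε) = 1 - (1 + ε)⁻¹ := by field_simp; ring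
      rw [e]; exact this
    have hzt : Real.exp (t * (ε / (1 + ε))) ≤ (1 + ε) ^ t := by
      rw [Real.exp_nat_mul]; exact pow_le_pow_left₀ (Real.exp_pos _).le hz t
    have h2 : X ≤ Real.exp (n * Qf b β n * ((1 + ε) - 1)) * ((1 + ε) ^ t)⁻¹ := by
      rw [← div_eq_mul_inv, le_div_iff₀ (by positivity)]; exact hX
    refine h2.trans ?_
    have h3 : ((1 + ε) ^ t)⁻¹ ≤ Real.exp (-(t * (ε / (1 + ε)))) := by
      rw [Real.exp_neg]; exact inv_anti₀ (Real.exp_pos _) hzt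
    refine (mul_le_mul_of_nonneg_left h3 (Real.exp_pos _).le).trans ?_
    rw [← Real.exp_add]
    refine Real.exp_le_exp.2 ?_
    have h4 : n * Qf b β n * ((1 + ε) - 1) ≤ (1 - ε) * t * ε := by
      have : n * Qf b β n ≤ (1 - ε) * t := hnQ.trans h
      rw [add_sub_cancel_left]; exact mul_le_mul_of_nonneg_right this hε.le
    have h5 : mf b β n ≤ t := by nlinarith
    have h6 : (1 - ε) * t * ε + -(t * (ε / (1 + ε))) = -(c * t) := by rw [hcd]; ring
    have h7 : c / 2 * (t + mf b β n) ≤ c * t := by nlinarith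
    linarith
  exact ⟨key _ (chern_pt n h0 h1 (by linarith) t), key _ (chern_upper n h0 h1 (by linarith) t)⟩

lemma upper_tail {b β : ℝ} (hb : 0 < b) (hβ0 : 0 ≤ β) (hb1 : β = 0 → b < 1)
    {ε : ℝ} (hε : 0 < ε) (hε1 : ε < 1) :
    ∃ c : ℝ, 0 < c ∧ ∀ᶠ n : ℕ in atTop, ∀ t : ℕ, (1 + ε) * t ≤ mf b β n →
      PhiB n (Qf b β n) t ≤ Real.exp (-c * (t + mf b β n)) := by
  obtain ⟨δ, hδ⟩ : ∃ δ, δ = ε / 3 := ⟨_, rfl⟩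
  have hδ0 : 0 < δ := by rw [hδ]; positivity
  have hlt : (1 + δ) * (1 + δ) < 1 + ε := by rw [hδ]; nlinarith
  have hc : 0 < δ * (1 / ((1 + δ) * (1 + δ)) - 1 / (1 + ε)) := by
    have := one_div_lt_one_div_of_lt (by positivity) hlt
    exact mul_pos hδ0 (by linarith)
  refine ⟨δ * (1 / ((1 + δ) * (1 + δ)) - 1 / (1 + ε)) / 2, by positivity, ?_⟩
  set c := δ * (1 / ((1 + δ) * (1 + δ)) - 1 / (1 + ε)) with hcd
  filter_upwards [Qf_eventually hβ0 hb1, tendsto_natCast_atTop_atTop.eventually_ge_atTop (2 / δ)]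
    with n hQ hn t h
  have h0 := (Qf_pos hb β n).le
  have h1 := Qf_le_one b β n
  have ht0 : (0 : ℝ) ≤ t := by positivity
  have hm := mf_pos hb β n
  have hn2 : 2 ≤ n * δ := by rwa [div_le_iff₀ hδ0] at hn
  have hnQ : mf b β n / (1 + δ) ≤ n * Qf b β n := by
    rw [div_le_iff₀ (by positivity), mf_eq, ← hQ.1]
    nlinarith
  have hX := chern_Phi n h0 h1 (z := 1 / (1 + δ)) (by positivity)
    (by rw [div_le_one (by positivity)]; linarith) t
  have h2 : PhiB n (Qf b β n) t ≤
      Real.exp (n * Qf b β n * (1 / (1 + δ) - 1)) * (1 + δ) ^ t := by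
    rw [one_div, inv_pow, ← div_eq_mul_inv, div_le_iff₀ (by positivity), ← one_div] at hX
    exact hX
  have h3 : (1 + δ) ^ t ≤ Real.exp (t * δ) := by
    rw [Real.exp_nat_mul]
    refine pow_le_pow_left₀ (by positivity) ?_ t
    have := Real.add_one_le_exp δ; linarith
  refine h2.trans ((mul_le_mul_of_nonneg_left h3 (Real.exp_pos _).le).trans ?_)
  rw [← Real.exp_add]
  refine Real.exp_le_exp.2 ?_
  have h4 : (t : ℝ) ≤ mf b β n / (1 + ε) := by rw [le_div_iff₀ (by positivity)]; linarith
  have h5 : (t : ℝ) ≤ mf b β n := by nlinarith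
  have h6 : n * Qf b β n * (1 / (1 + δ) - 1) ≤ mf b β n / (1 + δ) * (-(δ / (1 + δ))) := by
    have e : 1 / (1 + δ) - 1 = -(δ / (1 + δ)) := by field_simp; ring
    rw [e]
    have : 0 < δ / (1 + δ) := by positivity
    nlinarith
  have h7 : (t : ℝ) * δ ≤ mf b β n / (1 + ε) * δ := by gcongr
  have h8 : mf b β n / (1 + δ) * (-(δ / (1 + δ))) + mf b β n / (1 + ε) * δ = -(c * mf b β n) := by
    rw [hcd]; field_simp; ring
  have h9 : c / 2 * (t + mf b β n) ≤ c * mf b β n := by nlinarith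
  linarith

lemma summable_exp_mf {b β : ℝ} (hb : 0 < b) (hβ1 : β < 1) {c : ℝ} (hc : 0 < c) :
    Summable (fun n => Real.exp (-c * mf b β n)) := by
  have h1 := ((isLittleO_exp_neg_mul_rpow_atTop hc (-2 / (1 - β))).comp_tendsto
    (mf_tendsto hb hβ1)).isBigO
  refine summable_of_isBigO_nat (g := fun n : ℕ => mf b β n ^ (-2 / (1 - β))) ?_ h1
  have e : ∀ n : ℕ, mf b β n ^ (-2 / (1 - β)) =
      b ^ (-2 / (1 - β)) * ((((n + 2 : ℕ)) : ℝ) ^ (-2 : ℝ)) := by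
    intro n
    unfold mf
    rw [Real.mul_rpow hb.le (by positivity), ← Real.rpow_mul (by positivity)]
    congr 2
    · push_cast; ring
    · have : 1 - β ≠ 0 := by linarith
      field_simp
  simp_rw [e]
  refine Summable.mul_left _ ?_
  exact (summable_nat_add_iff (f := fun n : ℕ => (n : ℝ) ^ (-2 : ℝ)) 2).2
    (Real.summable_nat_rpow.2 (by norm_num))

lemma window_weight {b β γ A : ℝ} (hb : 0 < b) (F : ℕ → ℝ)
    (hF : Tendsto (fun n => F n * mf b β n ^ γ) atTop (𝓝 A)) {ε' : ℝ} (hε' : 0 < ε') :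
    ∃ ε : ℝ, 0 < ε ∧ ε ≤ 1 / 4 ∧ ∀ᶠ n : ℕ in atTop, ∀ t : ℕ,
      (1 - ε) * t < mf b β n → mf b β n < (1 + ε) * t → |F n * (t : ℝ) ^ γ - A| ≤ ε' := by
  have hc : ContinuousAt (fun u : ℝ × ℝ => u.1 * u.2 ^ γ) (A, 1) :=
    continuousAt_fst.mul (continuousAt_snd.rpow_const (Or.inl one_ne_zero))
  obtain ⟨δ, hδ, h⟩ := Metric.continuousAt_iff.1 hc ε' hε'
  refine ⟨min (δ / 4) (1 / 4), by positivity, min_le_right _ _, ?_⟩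
  set ε := min (δ / 4) (1 / 4) with hε
  have hε4 : ε ≤ 1 / 4 := min_le_right _ _
  have hεδ : ε ≤ δ / 4 := min_le_left _ _
  have hε0 : 0 < ε := by positivity
  filter_upwards [Metric.tendsto_nhds.1 hF δ hδ] with n hn t h1 h2
  have hm := mf_pos hb β n
  have ht0 : (0 : ℝ) ≤ t := by positivity
  have hv : |(t : ℝ) / mf b β n - 1| < δ := by
    have e : (t : ℝ) / mf b β n - 1 = (t - mf b β n) / mf b β n := by field_simp
    rw [e, abs_div, abs_of_pos hm, div_lt_iff₀ hm, abs_lt]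
    constructor <;> nlinarith
  have := @h (F n * mf b β n ^ γ, (t : ℝ) / mf b β n) (by
    rw [Prod.dist_eq, max_lt_iff]
    exact ⟨hn, by rw [Real.dist_eq]; exact hv⟩)
  simp only [Real.dist_eq, Real.one_rpow, mul_one] at this
  rw [Real.div_rpow ht0 hm.le] at this
  have e : F n * mf b β n ^ γ * ((t : ℝ) ^ γ / mf b β n ^ γ) = F n * (t : ℝ) ^ γ := by
    have : mf b β n ^ γ ≠ 0 := by positivity
    field_simp
  rw [e] at this
  exact this.le

lemma sum_Ico_tele (f : ℕ → ℝ) {L R : ℕ} (h : L ≤ R) :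
    ∑ n ∈ Finset.Ico L R, (f n - f (n + 1)) = f L - f R := by
  induction R, h using Nat.le_induction with
  | base => simp
  | succ R hR ih => rw [Finset.sum_Ico_succ_top hR, ih]; ring

theorem core {b β γ A : ℝ} (hb : 0 < b) (hβ0 : 0 ≤ β) (hβ1 : β < 1) (hb1 : β = 0 → b < 1)
    (hγ : 0 < γ) (hA : 0 ≤ A) (F : ℕ → ℝ) (hF0 : ∀ n, 0 ≤ F n)
    (hF : Tendsto (fun n => F n * mf b β n ^ γ) atTop (𝓝 A))
    (hFs : Summable (fun n => F n * Qf b β n)) :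
    Tendsto (fun t : ℕ => (∑' n, F n * (Qf b β n * binP n (Qf b β n) t)) * (t : ℝ) ^ γ) atTop
      (𝓝 (A / (1 - β))) := by
  have hκ : 0 < 1 - β := by linarith
  -- reduction
  suffices H : ∀ η : ℝ, 0 < η → ∀ᶠ t : ℕ in atTop,
      |(1 - β) * ((∑' n, F n * (Qf b β n * binP n (Qf b β n) t)) * (t : ℝ) ^ γ) - A| ≤ η by
    have h1 : Tendsto (fun t : ℕ =>
        (1 - β) * ((∑' n, F n * (Qf b β n * binP n (Qf b β n) t)) * (t : ℝ) ^ γ)) atTop (𝓝 A) := by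
      refine Metric.tendsto_nhds.2 fun η hη => ?_
      filter_upwards [H (η / 2) (by positivity)] with t ht
      rw [Real.dist_eq]; linarith
    have h2 := h1.div_const (1 - β)
    refine h2.congr fun t => ?_
    field_simp
  intro η hη
  obtain ⟨κ, hκd⟩ : ∃ κ, κ = 1 - β := ⟨_, rfl⟩
  rw [← hκd] at hκ ⊢
  obtain ⟨ε', hε'0, hε'1, hε'2⟩ : ∃ ε' : ℝ, 0 < ε' ∧ ε' ≤ κ / 2 ∧
      ε' * (κ + A) * (2 / κ) ≤ η / 4 := by
    refine ⟨min (κ / 2) (η / 4 / ((κ + A) * (2 / κ))), by positivity, min_le_left _ _, ?_⟩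
    rw [mul_assoc, ← le_div_iff₀ (by positivity)]
    exact min_le_right _ _
  obtain ⟨ε, hε0, hε4, hW⟩ := window_weight (γ := γ) hb F hF hε'0
  obtain ⟨c₁, hc₁, hlow⟩ := lower_tail (β := β) hb hε0 (by linarith)
  obtain ⟨c₂, hc₂, hlow2⟩ := lower_tail (β := β) hb (half_pos hε0) (by linarith)
  obtain ⟨c₃, hc₃, hupp⟩ := upper_tail hb hβ0 hb1 hε0 (by linarith)
  -- common constant
  obtain ⟨c, hc, hcc1, hcc2, hcc3⟩ : ∃ c : ℝ, 0 < c ∧ c ≤ c₁ ∧ c ≤ c₂ ∧ c ≤ c₃ :=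
    ⟨min c₁ (min c₂ c₃), by positivity, min_le_left _ _,
      (min_le_right _ _).trans (min_le_left _ _), (min_le_right _ _).trans (min_le_right _ _)⟩
  have hmono : ∀ (c' : ℝ) (n t : ℕ), c ≤ c' →
      Real.exp (-c' * (t + mf b β n)) ≤ Real.exp (-c * (t + mf b β n)) := by
    intro c' n t h
    refine Real.exp_le_exp.2 ?_
    have : 0 ≤ (t : ℝ) + mf b β n := by have := mf_pos hb β n; positivity
    nlinarith
  have hEs := summable_exp_mf hb hβ1 hc
  -- boundedness of F
  obtain ⟨C, hC⟩ : ∃ C : ℝ, ∀ n, F n ≤ C := by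
    have h1 : Tendsto (fun n => (F n * mf b β n ^ γ) * (mf b β n ^ (-γ))) atTop (𝓝 (A * 0)) :=
      hF.mul ((tendsto_rpow_neg_atTop hγ).comp (mf_tendsto hb hβ1))
    obtain ⟨C, hC⟩ := h1.bddAbove_range
    refine ⟨C, fun n => ?_⟩
    have := hC ⟨n, rfl⟩
    have hm := mf_pos hb β n
    have e : F n * mf b β n ^ γ * mf b β n ^ (-γ) = F n := by
      rw [Real.rpow_neg hm.le]; field_simp
    simpa [e] using this
  have hC0 : 0 ≤ C := (hF0 0).trans (hC 0)
  have hexp0 : Tendsto (fun t : ℕ => (t : ℝ) ^ γ * Real.exp (-c * t)) atTop (𝓝 0) := by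
    exact (tendsto_rpow_mul_exp_neg_mul_atTop_nhds_zero γ c hc).comp tendsto_natCast_atTop_atTop
  have hexp1 : Tendsto (fun t : ℕ => Real.exp (-c * t)) atTop (𝓝 0) := by
    have := (tendsto_rpow_mul_exp_neg_mul_atTop_nhds_zero 0 c hc).comp
      (tendsto_natCast_atTop_atTop (R := ℝ))
    simpa [Function.comp_def] using this
  have hev1 : ∀ᶠ t : ℕ in atTop,
      κ * (C * (∑' n, Real.exp (-c * mf b β n)) * ((t : ℝ) ^ γ * Real.exp (-c * t))) < η / 4 := by
    refine ((hexp0.const_mul (C * (∑' n, Real.exp (-c * mf b β n)))).const_mul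
      κ).eventually_lt_const ?_
    simp; positivity
  have hev2 : ∀ᶠ t : ℕ in atTop, A * (2 * Real.exp (-c * t)) < η / 4 := by
    refine ((hexp1.const_mul 2).const_mul A).eventually_lt_const ?_
    simp; positivity
  have hI := incr hb hβ0 hβ1 hb1 hε'0
  have hsmall : ∀ᶠ n : ℕ in atTop, 1 / ((n : ℝ) + 2) ≤ ε / 2 := by
    have := tendsto_n2.inv_tendsto_atTop.eventually_lt_const (half_pos hε0)
    filter_upwards [this] with n hn
    simpa using hn.le
  obtain ⟨N, hN⟩ := eventually_atTop.1 (hW.and (hI.and (hupp.and hsmall)))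
  have hev3 : ∀ᶠ t : ℕ in atTop, mf b β (N + 1) ≤ (1 - ε) * t :=
    (tendsto_natCast_atTop_atTop.const_mul_atTop
      (by linarith : 0 < 1 - ε)).eventually_ge_atTop _
  filter_upwards [hev1, hev2, hev3, eventually_gt_atTop 0] with t ht1 ht2 ht3 htpos
  have htp : (0 : ℝ) < t := by exact_mod_cast htpos
  have exL : ∃ n, (1 - ε) * t < mf b β n :=
    ((mf_tendsto hb hβ1).eventually_gt_atTop _).exists
  have exR : ∃ n, (1 + ε) * t ≤ mf b β n :=
    ((mf_tendsto hb hβ1).eventually_ge_atTop _).exists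
  obtain ⟨L, hL1, hL2⟩ : ∃ L, (∀ n, L ≤ n → (1 - ε) * t < mf b β n) ∧
      ∀ n, n < L → mf b β n ≤ (1 - ε) * t :=
    ⟨Nat.find exL, fun n hn => (Nat.find_spec exL).trans_le (mf_mono hb hβ1 hn),
      fun n hn => not_lt.1 (Nat.find_min exL hn)⟩
  obtain ⟨R, hR1, hR2⟩ : ∃ R, (∀ n, R ≤ n → (1 + ε) * t ≤ mf b β n) ∧
      ∀ n, n < R → mf b β n < (1 + ε) * t :=
    ⟨Nat.find exR, fun n hn => (Nat.find_spec exR).trans (mf_mono hb hβ1 hn),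
      fun n hn => not_le.1 (Nat.find_min exR hn)⟩
  have hLN : N + 1 < L := by
    by_contra hcon
    have := hL1 (N + 1) (not_lt.1 hcon)
    linarith
  have hLR : L ≤ R := by
    by_contra hcon
    have h1 := hL2 R (not_le.1 hcon)
    have h2 := hR1 R le_rfl
    nlinarith
  set Q := Qf b β with hQ
  have hQ0 : ∀ n, 0 ≤ Q n := fun n => (Qf_pos hb β n).le
  have hQ1 : ∀ n, Q n ≤ 1 := fun n => Qf_le_one b β n
  have hB0 : ∀ n, 0 ≤ binP n (Q n) t := fun n => binP_nonneg n (hQ0 n) (hQ1 n) t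
  -- Phi at ends
  have hPL : 1 - PhiB L (Q L) t ≤ Real.exp (-c * t) := by
    have hm : mf b β L ≤ (1 - ε / 2) * t := by
      obtain ⟨K, rfl⟩ : ∃ K, L = K + 1 := ⟨L - 1, by omega⟩
      have h1 := mf_succ_le hb hβ0 K
      have h2 := hL2 K (by omega)
      have h3 := (hN K (by omega)).2.2.2
      have h4 := mf_pos hb β K
      have h5 : mf b β K * (1 + 1 / ((K : ℝ) + 2)) ≤ (1 - ε) * t * (1 + ε / 2) := by
        have : (0 : ℝ) ≤ 1 / ((K : ℝ) + 2) := by positivity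
        exact mul_le_mul h2 (by linarith) (by linarith) (by nlinarith)
      nlinarith [mul_pos (mul_pos hε0 hε0) htp]
    refine ((hlow2 L t hm).2.trans (hmono c₂ L t hcc2)).trans (Real.exp_le_exp.2 ?_)
    have := mf_pos hb β L
    nlinarith
  have hPR : PhiB R (Q R) t ≤ Real.exp (-c * t) := by
    refine (((hN R (by omega)).2.2.1 t (hR1 R le_rfl)).trans (hmono c₃ R t hcc3)).trans
      (Real.exp_le_exp.2 ?_)
    have := mf_pos hb β R
    nlinarith
  have hΔ1 : PhiB L (Q L) t - PhiB R (Q R) t ≤ 1 := by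
    have h1 := PhiB_le_one L (hQ0 L) (hQ1 L) t
    have h2 := PhiB_nonneg R (hQ0 R) (hQ1 R) t
    linarith
  have htele : ∑ n ∈ Finset.Ico L R, Dinc b β t n = PhiB L (Q L) t - PhiB R (Q R) t :=
    sum_Ico_tele (fun n => PhiB n (Q n) t) hLR
  have hΔ2 : 1 - (PhiB L (Q L) t - PhiB R (Q R) t) ≤ 2 * Real.exp (-c * t) := by linarith
  generalize PhiB L (Q L) t - PhiB R (Q R) t = Δ at *
  -- the middle part
  have hmid : ∀ n ∈ Finset.Ico L R, |F n * (t : ℝ) ^ γ - A| ≤ ε' ∧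
      |Dinc b β t n - κ * (Q n * binP n (Q n) t)| ≤ ε' * (Q n * binP n (Q n) t) := by
    intro n hn
    rw [Finset.mem_Ico] at hn
    have h1 := hN n (by omega)
    have h2 := hL1 n hn.1
    rw [hκd]
    exact ⟨h1.1 t h2 (hR2 n hn.2), h1.2.1 t (by nlinarith)⟩
  have hM : κ * ∑ n ∈ Finset.Ico L R, (Q n * binP n (Q n) t) - Δ ≤
      ε' * ∑ n ∈ Finset.Ico L R, (Q n * binP n (Q n) t) := by
    rw [← htele, Finset.mul_sum, Finset.mul_sum, ← Finset.sum_sub_distrib]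
    refine Finset.sum_le_sum fun n hn => ?_
    have := abs_le.1 (hmid n hn).2
    linarith
  have hmidsum : |κ * ∑ n ∈ Finset.Ico L R, (F n * (t : ℝ) ^ γ * (Q n * binP n (Q n) t)) - A * Δ| ≤
      ε' * (κ + A) * ∑ n ∈ Finset.Ico L R, (Q n * binP n (Q n) t) := by
    rw [← htele, Finset.mul_sum, Finset.mul_sum, Finset.mul_sum, ← Finset.sum_sub_distrib]
    refine (Finset.abs_sum_le_sum_abs _ _).trans (Finset.sum_le_sum fun n hn => ?_)
    obtain ⟨h1, h2⟩ := hmid n hn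
    have hv : 0 ≤ Q n * binP n (Q n) t := mul_nonneg (hQ0 n) (hB0 n)
    generalize Q n * binP n (Q n) t = v at *
    have e : κ * (F n * (t : ℝ) ^ γ * v) - A * Dinc b β t n =
        κ * v * (F n * (t : ℝ) ^ γ - A) - A * (Dinc b β t n - κ * v) := by ring
    rw [e]
    refine (abs_sub _ _).trans ?_
    rw [abs_mul (κ * v), abs_mul A, abs_of_nonneg hA, abs_of_nonneg (mul_nonneg hκ.le hv)]
    have h3 : κ * v * |F n * (t : ℝ) ^ γ - A| ≤ κ * v * ε' := by gcongr
    have h4 : A * |Dinc b β t n - κ * v| ≤ A * (ε' * v) := by gcongr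
    linarith
  have hM0 : 0 ≤ ∑ n ∈ Finset.Ico L R, (Q n * binP n (Q n) t) :=
    Finset.sum_nonneg fun n _ => mul_nonneg (hQ0 n) (hB0 n)
  have hM2 : ∑ n ∈ Finset.Ico L R, (Q n * binP n (Q n) t) ≤ 2 / κ := by
    rw [le_div_iff₀ hκ]; nlinarith
  have hmid3 : |κ * ∑ n ∈ Finset.Ico L R, (F n * (t : ℝ) ^ γ * (Q n * binP n (Q n) t)) - A * Δ| ≤
      η / 4 := by
    refine hmidsum.trans (le_trans ?_ hε'2)
    have : 0 ≤ ε' * (κ + A) := by positivity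
    gcongr
  -- outer part
  have hfs : Summable (fun n => F n * (Q n * binP n (Q n) t)) := by
    refine Summable.of_nonneg_of_le (fun n => mul_nonneg (hF0 n) (mul_nonneg (hQ0 n) (hB0 n)))
      (fun n => ?_) hFs
    refine mul_le_mul_of_nonneg_left ?_ (hF0 n)
    exact mul_le_of_le_one_right (hQ0 n) (binP_le_one n (hQ0 n) (hQ1 n) t)
  have hsplit := hfs.sum_add_tsum_compl (s := Finset.Ico L R)
  have hout0 : 0 ≤ ∑' n : ↑((Finset.Ico L R : Set ℕ)ᶜ), F n * (Q n * binP n (Q n) t) :=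
    tsum_nonneg fun n => mul_nonneg (hF0 n) (mul_nonneg (hQ0 n) (hB0 n))
  have hgs : Summable (fun n => C * Real.exp (-c * t) * Real.exp (-c * mf b β n)) :=
    hEs.mul_left _
  have hout1 : ∑' n : ↑((Finset.Ico L R : Set ℕ)ᶜ), F n * (Q n * binP n (Q n) t) ≤
      C * Real.exp (-c * t) * ∑' n, Real.exp (-c * mf b β n) := by
    rw [← tsum_mul_left]
    refine le_trans ?_ (Summable.tsum_subtype_le
      (fun n => C * Real.exp (-c * t) * Real.exp (-c * mf b β n))
      ((Finset.Ico L R : Set ℕ)ᶜ) (fun n => by positivity) hgs)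
    refine Summable.tsum_le_tsum (fun n => ?_) (hfs.subtype _) (hgs.subtype _)
    obtain ⟨n, hn⟩ := n
    have hBn : binP n (Q n) t ≤ Real.exp (-c * (t + mf b β n)) := by
      have hn' : n < L ∨ R ≤ n := by
        simp only [Set.mem_compl_iff, Finset.mem_coe, Finset.mem_Ico, not_and, not_lt] at hn
        by_cases h : L ≤ n
        · exact Or.inr (hn h)
        · exact Or.inl (not_le.1 h)
      rcases hn' with h | h
      · exact (hlow n t (hL2 n h)).1.trans (hmono c₁ n t hcc1)
      · exact ((binP_le_PhiB n (hQ0 n) (hQ1 n) t).trans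
          ((hN n (by omega)).2.2.1 t (hR1 n h))).trans (hmono c₃ n t hcc3)
    rw [mul_add, Real.exp_add] at hBn
    show F n * (Q n * binP n (Q n) t) ≤ C * Real.exp (-c * t) * Real.exp (-c * mf b β n)
    rw [mul_assoc]
    refine mul_le_mul (hC n) ((mul_le_of_le_one_left (hB0 n) (hQ1 n)).trans hBn)
      (mul_nonneg (hQ0 n) (hB0 n)) hC0
  generalize (∑' n : ↑((Finset.Ico L R : Set ℕ)ᶜ), F n * (Q n * binP n (Q n) t)) = O at *
  rw [← hsplit]
  have htγ : 0 < (t : ℝ) ^ γ := by positivity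
  have hO : κ * (O * (t : ℝ) ^ γ) < η / 4 := by
    refine lt_of_le_of_lt ?_ ht1
    have : O * (t : ℝ) ^ γ ≤ C * Real.exp (-c * t) * (∑' n, Real.exp (-c * mf b β n)) * (t : ℝ) ^ γ := by
      gcongr
    refine mul_le_mul_of_nonneg_left (this.trans (le_of_eq (by ring))) hκ.le
  have hO0 : 0 ≤ κ * (O * (t : ℝ) ^ γ) := by positivity
  have e : κ * ((∑ n ∈ Finset.Ico L R, F n * (Q n * binP n (Q n) t) + O) * (t : ℝ) ^ γ) =
      κ * ∑ n ∈ Finset.Ico L R, (F n * (t : ℝ) ^ γ * (Q n * binP n (Q n) t)) +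
        κ * (O * (t : ℝ) ^ γ) := by
    rw [add_mul, mul_add, Finset.sum_mul]
    congr 2
    refine Finset.sum_congr rfl fun n _ => by ring
  rw [e]
  have hAΔ1 : A * (1 - Δ) ≤ A * (2 * Real.exp (-c * t)) := by gcongr
  have hAΔ0 : 0 ≤ A * (1 - Δ) := mul_nonneg hA (by linarith)
  have := abs_le.1 hmid3
  rw [abs_le]
  constructor <;> linarith

/-! ### convolutions -/

lemma conv_nonneg {f g : ℕ → ℝ} (hf : ∀ i, 0 ≤ f i) (hg : ∀ i, 0 ≤ g i) (s : ℕ) :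
    0 ≤ conv f g s := Finset.sum_nonneg fun i _ => mul_nonneg (hf i) (hg _)

lemma hasSum_conv {f g : ℕ → ℝ} (hf : ∀ i, 0 ≤ f i) (hg : ∀ i, 0 ≤ g i) {F G : ℝ}
    (hF : HasSum f F) (hG : HasSum g G) : HasSum (conv f g) (F * G) := by
  have hf' : Summable (fun i => ‖f i‖) := by
    simpa [Real.norm_of_nonneg (hf _)] using hF.summable
  have hg' : Summable (fun i => ‖g i‖) := by
    simpa [Real.norm_of_nonneg (hg _)] using hG.summable
  have h1 := tsum_mul_tsum_eq_tsum_sum_range_of_summable_norm hf' hg'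
  have h2 := (summable_norm_sum_mul_range_of_summable_norm hf' hg').of_norm
  rw [hF.tsum_eq, hG.tsum_eq] at h1
  rw [h1]
  exact h2.hasSum

lemma hasSum_conv2 {F G : ℕ → ℕ → ℝ} {F1 G1 : ℕ → ℝ} (hF : ∀ i j, 0 ≤ F i j)
    (hG : ∀ i j, 0 ≤ G i j) (hF1 : ∀ i, HasSum (F i) (F1 i)) (hG1 : ∀ i, HasSum (G i) (G1 i))
    (s : ℕ) : HasSum (conv2 F G s) (conv F1 G1 s) := by
  have : conv2 F G s = fun t => ∑ i ∈ Finset.range (s + 1), conv (F i) (G (s - i)) t := by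
    funext t; rfl
  rw [this]
  exact hasSum_sum fun i _ => hasSum_conv (hF i) (hG _) (hF1 i) (hG1 _)

lemma conv2_nonneg {F G : ℕ → ℕ → ℝ} (hF : ∀ i j, 0 ≤ F i j) (hG : ∀ i j, 0 ≤ G i j) (s t : ℕ) :
    0 ≤ conv2 F G s t :=
  Finset.sum_nonneg fun i _ => Finset.sum_nonneg fun j _ => mul_nonneg (hF _ _) (hG _ _)

lemma half_conv {f h : ℕ → ℝ} {A F γ : ℝ} (hγ : 0 < γ) (hf : ∀ i, 0 ≤ f i) (hF : HasSum f F)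
    (hh : Tendsto (fun t : ℕ => h t * (t : ℝ) ^ γ) atTop (𝓝 A)) (K : ℕ → ℕ)
    (hK : ∀ t, K t ≤ t / 2 + 1) (hK2 : Tendsto K atTop atTop) :
    Tendsto (fun t : ℕ => (∑ i ∈ Finset.range (K t), f i * h (t - i)) * (t : ℝ) ^ γ) atTop
      (𝓝 (A * F)) := by
  obtain ⟨C, hC⟩ : ∃ C : ℝ, ∀ t : ℕ, |h t * (t : ℝ) ^ γ| ≤ C := by
    obtain ⟨C, hC⟩ := hh.abs.bddAbove_range
    exact ⟨C, fun t => hC ⟨t, rfl⟩⟩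
  have hC0 : 0 ≤ C := (abs_nonneg _).trans (hC 0)
  have key : Tendsto (fun t : ℕ => ∑' i, if i < K t then f i * (h (t - i) * (t : ℝ) ^ γ) else 0)
      atTop (𝓝 (∑' i, f i * A)) := by
    refine tendsto_tsum_of_dominated_convergence (bound := fun i => f i * (C * 2 ^ γ))
      (hF.summable.mul_right _) ?_ ?_
    · intro i
      have h1 : Tendsto (fun t : ℕ => f i * (h (t - i) * (t : ℝ) ^ γ)) atTop (𝓝 (f i * A)) := by
        refine Tendsto.const_mul _ ?_
        have h2 : Tendsto (fun t : ℕ => (h (t - i) * ((t - i : ℕ) : ℝ) ^ γ)) atTop (𝓝 A) :=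
          hh.comp (tendsto_sub_atTop_nat i)
        have h3 : Tendsto (fun t : ℕ => (t : ℝ) / ((t - i : ℕ) : ℝ)) atTop (𝓝 1) := by
          have h4 : Tendsto (fun t : ℕ => 1 + (i : ℝ) / ((t - i : ℕ) : ℝ)) atTop (𝓝 (1 + 0)) := by
            refine Tendsto.const_add _ ?_
            exact tendsto_const_nhds.div_atTop
              (tendsto_natCast_atTop_atTop.comp (tendsto_sub_atTop_nat i))
          rw [add_zero] at h4
          refine h4.congr' ?_
          filter_upwards [eventually_gt_atTop i] with t ht
          have : (0 : ℝ) < (t : ℝ) - i := by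
            have : (i : ℝ) < t := by exact_mod_cast ht
            linarith
          rw [Nat.cast_sub ht.le]; field_simp; ring
        have h5 := h2.mul (h3.rpow_const (p := γ) (Or.inl one_ne_zero))
        rw [Real.one_rpow, mul_one] at h5
        refine h5.congr' ?_
        filter_upwards [eventually_gt_atTop i] with t ht
        have : (0 : ℝ) < ((t - i : ℕ) : ℝ) := by exact_mod_cast Nat.sub_pos_of_lt ht
        rw [Real.div_rpow (by positivity) this.le]
        have : ((t - i : ℕ) : ℝ) ^ γ ≠ 0 := by positivity
        field_simp
      refine h1.congr' ?_
      filter_upwards [hK2.eventually_gt_atTop i] with t ht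
      rw [if_pos ht]
    · refine Eventually.of_forall fun t i => ?_
      split_ifs with hi
      · rw [norm_mul, Real.norm_of_nonneg (hf i)]
        refine mul_le_mul_of_nonneg_left ?_ (hf i)
        have hit : i ≤ t / 2 := by have := hK t; omega
        rcases Nat.eq_zero_or_pos t with rfl | ht
        · simp [Real.zero_rpow hγ.ne']; positivity
        have h2 : (t : ℝ) ≤ 2 * ((t - i : ℕ) : ℝ) := by
          exact_mod_cast (by omega : t ≤ 2 * (t - i))
        have h3 : (t : ℝ) ^ γ ≤ 2 ^ γ * ((t - i : ℕ) : ℝ) ^ γ := by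
          rw [← Real.mul_rpow (by norm_num) (by positivity)]
          gcongr
        have h4 := hC (t - i)
        rw [abs_mul, abs_of_nonneg (by positivity : (0 : ℝ) ≤ ((t - i : ℕ) : ℝ) ^ γ)] at h4
        rw [Real.norm_eq_abs, abs_mul, abs_of_nonneg (by positivity : (0 : ℝ) ≤ (t : ℝ) ^ γ)]
        calc |h (t - i)| * (t : ℝ) ^ γ ≤ |h (t - i)| * (2 ^ γ * ((t - i : ℕ) : ℝ) ^ γ) := by gcongr
          _ = (|h (t - i)| * ((t - i : ℕ) : ℝ) ^ γ) * 2 ^ γ := by ring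
          _ ≤ C * 2 ^ γ := by gcongr
      · simp; exact mul_nonneg (hf i) (by positivity)
  rw [tsum_mul_right, hF.tsum_eq, mul_comm] at key
  refine key.congr fun t => ?_
  rw [tsum_eq_sum (s := Finset.range (K t)), Finset.sum_mul]
  · refine Finset.sum_congr rfl fun i hi => ?_
    rw [if_pos (Finset.mem_range.1 hi)]; ring
  · intro i hi
    rw [if_neg (by simpa using hi)]

lemma conv_tail {f h : ℕ → ℝ} {A B F H γ : ℝ} (hγ : 0 < γ) (hf : ∀ i, 0 ≤ f i) (hF : HasSum f F)
    (hh : ∀ i, 0 ≤ h i) (hH : HasSum h H)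
    (hfB : Tendsto (fun t : ℕ => f t * (t : ℝ) ^ γ) atTop (𝓝 B))
    (hhA : Tendsto (fun t : ℕ => h t * (t : ℝ) ^ γ) atTop (𝓝 A)) :
    Tendsto (fun t : ℕ => conv f h t * (t : ℝ) ^ γ) atTop (𝓝 (A * F + B * H)) := by
  have h1 := half_conv hγ hf hF hhA (fun t => t / 2 + 1) (fun t => le_rfl)
    (tendsto_atTop.2 fun N => by
      filter_upwards [eventually_ge_atTop (2 * N)] with t ht; omega)
  have h2 := half_conv hγ hh hH hfB (fun t => t - t / 2) (fun t => by omega)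
    (tendsto_atTop.2 fun N => by
      filter_upwards [eventually_ge_atTop (2 * N)] with t ht; omega)
  refine (h1.add h2).congr fun t => ?_
  rw [← add_mul]
  congr 1
  unfold conv
  rw [← Finset.sum_range_add_sum_Ico (fun i => f i * h (t - i)) (by omega : t / 2 + 1 ≤ t + 1)]
  congr 1
  refine Finset.sum_bij' (fun i _ => t - i) (fun i _ => t - i) ?_ ?_ ?_ ?_ ?_
  · intro i hi; simp at hi ⊢; omega
  · intro i hi; simp at hi ⊢; omega
  · intro i hi; simp at hi; omega
  · intro i hi; simp at hi; omega
  · intro i hi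
    simp at hi
    rw [show t - (t - i) = i by omega, mul_comm]

/-! ### compound Poisson -/

lemma tonelli {c : ℕ → ℝ} {k : ℕ → ℕ → ℝ} (hc : ∀ x, 0 ≤ c x) (hcs : Summable c)
    (hk : ∀ x s, 0 ≤ k x s) (hk1 : ∀ x, HasSum (k x) 1) :
    HasSum (fun s => ∑' x, c x * k x s) (∑' x, c x) := by
  have hs : Summable (fun z : ℕ × ℕ => c z.1 * k z.1 z.2) := by
    refine (summable_prod_of_nonneg fun z => mul_nonneg (hc _) (hk _ _)).2 ⟨fun x => ?_, ?_⟩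
    · exact (hk1 x).summable.mul_left (c x)
    · simpa [tsum_mul_left, (hk1 _).tsum_eq] using hcs
  have h1 : ∑' s, ∑' x, c x * k x s = ∑' x, c x := by
    rw [Summable.tsum_comm (f := fun x s => c x * k x s) hs]
    refine tsum_congr fun x => ?_
    rw [tsum_mul_left, (hk1 x).tsum_eq, mul_one]
  rw [← h1]
  exact (hs.prod_symm.prod).hasSum

lemma convPow_nonneg {g : ℕ → ℝ} (hg : ∀ s, 0 ≤ g s) (j s : ℕ) : 0 ≤ convPow g j s := by
  induction j generalizing s with
  | zero => simp only [convPow]; split_ifs <;> norm_num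
  | succ j ih => exact conv_nonneg hg ih s

lemma convPow_hasSum {g : ℕ → ℝ} (hg : ∀ s, 0 ≤ g s) (h1 : HasSum g 1) (j : ℕ) :
    HasSum (convPow g j) 1 := by
  induction j with
  | zero => exact hasSum_ite_eq 0 1
  | succ j ih =>
    have := hasSum_conv hg (convPow_nonneg hg j) h1 ih
    rw [one_mul] at this
    exact this

lemma cpoi_nonneg {lam : ℝ} (hl : 0 ≤ lam) {g : ℕ → ℝ} (hg : ∀ s, 0 ≤ g s) (s : ℕ) :
    0 ≤ cpoi lam g s :=
  tsum_nonneg fun j => mul_nonneg (by positivity) (convPow_nonneg hg j s)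

lemma cpoi_hasSum {lam : ℝ} (hl : 0 ≤ lam) {g : ℕ → ℝ} (hg : ∀ s, 0 ≤ g s) (h1 : HasSum g 1) :
    HasSum (cpoi lam g) 1 := by
  have hsum : HasSum (fun j : ℕ => Real.exp (-lam) * lam ^ j / (j.factorial : ℝ)) 1 := by
    have h := (NormedSpace.expSeries_div_hasSum_exp (𝔸 := ℝ) lam).mul_left (Real.exp (-lam))
    rw [← Real.exp_eq_exp_ℝ, ← Real.exp_add, neg_add_cancel, Real.exp_zero] at h
    simpa [mul_div_assoc] using h
  have := tonelli (c := fun j : ℕ => Real.exp (-lam) * lam ^ j / (j.factorial : ℝ))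
    (k := convPow g) (fun j => by positivity) hsum.summable (convPow_nonneg hg)
    (convPow_hasSum hg h1)
  rw [hsum.tsum_eq] at this
  exact this

def wgt (θ : ℝ) (s : ℕ) : ℝ := (1 + (s : ℝ)) ^ (-θ)

lemma wgt_pos (θ : ℝ) (s : ℕ) : 0 < wgt θ s := by unfold wgt; positivity

lemma wgt_summable {θ : ℝ} (hθ : 1 < θ) : Summable (wgt θ) := by
  have := (summable_nat_add_iff (f := fun n : ℕ => (n : ℝ) ^ (-θ)) 1).2
    (Real.summable_nat_rpow.2 (by linarith))
  refine this.congr fun n => ?_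
  unfold wgt; push_cast; rw [add_comm]

lemma conv_wgt {θ : ℝ} (hθ : 1 < θ) (s : ℕ) :
    conv (wgt θ) (wgt θ) s ≤ (2 ^ θ * (2 * ∑' i, wgt θ i)) * wgt θ s := by
  have key : ∀ i ∈ Finset.range (s + 1), wgt θ i * wgt θ (s - i) ≤
      2 ^ θ * wgt θ s * (wgt θ i + wgt θ (s - i)) := by
    have h0 : ∀ j : ℕ, s ≤ 2 * j → wgt θ j ≤ 2 ^ θ * wgt θ s := by
      intro j hj
      have hj' : (s : ℝ) ≤ 2 * j := by exact_mod_cast hj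
      unfold wgt
      have e : (2 : ℝ) ^ θ * (1 + (s : ℝ)) ^ (-θ) = ((1 + (s : ℝ)) / 2) ^ (-θ) := by
        rw [Real.div_rpow (by positivity) (by norm_num), Real.rpow_neg (by norm_num : (0:ℝ) ≤ 2)]
        field_simp
      rw [e]
      exact Real.rpow_le_rpow_of_nonpos (by positivity) (by linarith) (by linarith)
    intro i hi
    have hi' : i ≤ s := by simpa [Nat.lt_succ_iff] using hi
    have p1 := wgt_pos θ i
    have p2 := wgt_pos θ (s - i)
    have p3 : 0 < 2 ^ θ * wgt θ s := mul_pos (by positivity) (wgt_pos θ s)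
    rcases le_total s (2 * i) with h | h
    · have := h0 i h
      nlinarith [mul_pos p3 p1]
    · have := h0 (s - i) (by omega)
      nlinarith [mul_pos p3 p2]
  unfold conv
  refine (Finset.sum_le_sum key).trans ?_
  rw [← Finset.mul_sum, Finset.sum_add_distrib]
  have hr : ∑ i ∈ Finset.range (s + 1), wgt θ (s - i) = ∑ i ∈ Finset.range (s + 1), wgt θ i := by
    have := Finset.sum_range_reflect (wgt θ) (s + 1)
    simpa using this
  have hle : ∑ i ∈ Finset.range (s + 1), wgt θ i ≤ ∑' i, wgt θ i :=
    (wgt_summable hθ).sum_le_tsum _ fun i _ => (wgt_pos θ i).le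
  rw [hr]
  have p3 : 0 < 2 ^ θ * wgt θ s := mul_pos (by positivity) (wgt_pos θ s)
  nlinarith

lemma cpoi_bound {lam θ K : ℝ} (hl : 0 ≤ lam) (hθ : 1 < θ) {g : ℕ → ℝ} (hg : ∀ s, 0 ≤ g s)
    (hK : ∀ s, g s ≤ K * wgt θ s) : ∃ C, ∀ s, cpoi lam g s ≤ C * wgt θ s := by
  set C0 := (2 : ℝ) ^ θ * (2 * ∑' i, wgt θ i) with hC0
  have hK0 : 0 ≤ K := by
    have h1 := (hg 0).trans (hK 0)
    exact nonneg_of_mul_nonneg_left h1 (wgt_pos θ 0)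
  have hC00 : 0 ≤ C0 := by
    have : 0 ≤ ∑' i, wgt θ i := tsum_nonneg fun i => (wgt_pos θ i).le
    positivity
  have hp : ∀ j s, convPow g j s ≤ (K * C0) ^ j * wgt θ s := by
    intro j
    induction j with
    | zero =>
      intro s
      simp only [convPow]
      split_ifs with h
      · subst h; simp [wgt]
      · simpa using (wgt_pos θ s).le
    | succ j ih =>
      intro s
      calc convPow g (j + 1) s = conv g (convPow g j) s := rfl
        _ ≤ ∑ i ∈ Finset.range (s + 1), (K * (K * C0) ^ j) * (wgt θ i * wgt θ (s - i)) := by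
          unfold conv
          refine Finset.sum_le_sum fun i _ => ?_
          have := mul_le_mul (hK i) (ih (s - i)) (convPow_nonneg hg _ _)
            (mul_nonneg hK0 (wgt_pos θ i).le)
          linarith
        _ = (K * (K * C0) ^ j) * conv (wgt θ) (wgt θ) s := by rw [← Finset.mul_sum]; rfl
        _ ≤ (K * (K * C0) ^ j) * (C0 * wgt θ s) := by
          gcongr; exact conv_wgt hθ s
        _ = _ := by ring
  have hs : Summable (fun j : ℕ => Real.exp (-lam) * ((lam * (K * C0)) ^ j / (j.factorial : ℝ))) :=
    (Real.summable_pow_div_factorial _).mul_left _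
  refine ⟨∑' j : ℕ, Real.exp (-lam) * ((lam * (K * C0)) ^ j / (j.factorial : ℝ)), fun s => ?_⟩
  rw [← tsum_mul_right]
  have hle : ∀ j : ℕ, Real.exp (-lam) * lam ^ j / (j.factorial : ℝ) * convPow g j s ≤
      Real.exp (-lam) * ((lam * (K * C0)) ^ j / (j.factorial : ℝ)) * wgt θ s := by
    intro j
    calc _ ≤ Real.exp (-lam) * lam ^ j / (j.factorial : ℝ) * ((K * C0) ^ j * wgt θ s) := by
          gcongr; exact hp j s
      _ = _ := by rw [mul_pow lam]; ring
  exact Summable.tsum_le_tsum hle (Summable.of_nonneg_of_le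
    (fun j => mul_nonneg (by positivity) (convPow_nonneg hg j s)) hle (hs.mul_right _))
    (hs.mul_right _)

lemma cpoi_tail {lam γ K : ℝ} (hl : 0 ≤ lam) (hγ : 0 < γ) {g : ℕ → ℝ} (hg : ∀ s, 0 ≤ g s)
    (hK : ∀ s, g s ≤ K * wgt (γ + 1) s) :
    Tendsto (fun t : ℕ => cpoi lam g t * (t : ℝ) ^ γ) atTop (𝓝 0) := by
  obtain ⟨C, hC⟩ := cpoi_bound hl (by linarith : 1 < γ + 1) hg hK
  have hC0 : 0 ≤ C := by
    have h1 := (cpoi_nonneg hl hg 0).trans (hC 0)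
    exact nonneg_of_mul_nonneg_left h1 (wgt_pos _ 0)
  have h1 : Tendsto (fun t : ℕ => C * (1 + (t : ℝ))⁻¹) atTop (𝓝 0) := by
    have := ((tendsto_atTop_add_const_left _ (1 : ℝ)
      tendsto_natCast_atTop_atTop).inv_tendsto_atTop).const_mul C
    simpa using this
  refine squeeze_zero (fun t => mul_nonneg (cpoi_nonneg hl hg t) (by positivity)) (fun t => ?_) h1
  calc _ ≤ C * wgt (γ + 1) t * (1 + (t : ℝ)) ^ γ := by
        have := hC t
        have h2 : (t : ℝ) ^ γ ≤ (1 + (t : ℝ)) ^ γ := by gcongr; linarith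
        exact mul_le_mul this h2 (by positivity) (mul_nonneg hC0 (wgt_pos _ _).le)
    _ = _ := by
        unfold wgt
        rw [mul_assoc, ← Real.rpow_add (by positivity), ← Real.rpow_neg_one]
        congr 2; ring

/-! ### assembly -/

/-- unnormalized marginal of `f₂'` -/
def Hs (p q : ℕ → ℝ) (s : ℕ) : ℝ :=
  ∑' x : ℕ, ((x.descFactorial 2 : ℝ) * q x * p x) * binP (x - 2) (q x) s

lemma summable_pow_p {α e : ℝ} {a : ℝ} (he : e - α < -1) (p : ℕ → ℝ)
    (hptail : Tendsto (fun x : ℕ => p x * (x : ℝ) ^ α) atTop (𝓝 a)) :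
    Summable (fun x : ℕ => (x : ℝ) ^ e * p x) := by
  have h1 : (fun x : ℕ => p x * (x : ℝ) ^ α) =O[atTop] (fun _ : ℕ => (1 : ℝ)) :=
    hptail.isBigO_one ℝ
  have h2 := h1.mul (Asymptotics.isBigO_refl (fun x : ℕ => (x : ℝ) ^ (e - α)) atTop)
  refine summable_of_isBigO_nat (Real.summable_nat_rpow.2 he) ?_
  refine (h2.congr' ?_ ?_)
  · filter_upwards [eventually_gt_atTop 0] with x hx
    have : (0 : ℝ) < x := by exact_mod_cast hx
    rw [Real.rpow_sub this]
    field_simp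
  · filter_upwards with x
    simp

lemma gInc_rel (q p : ℕ → ℝ) (k : ℕ) (hm : mom p q 1 0 ≠ 0) :
    gInc p q (k + 1) = Hs p q k / mom p q 1 0 / ((k : ℝ) + 1) := by
  unfold gInc Hs
  rw [div_div, div_eq_div_iff hm (mul_ne_zero hm (by positivity)), mul_left_comm, mul_comm _ (mom p q 1 0)]
  congr 1
  rw [mul_comm, ← tsum_mul_left]
  refine tsum_congr fun x => ?_
  match x with
  | 0 => simp
  | 1 => simp [binP]
  | n + 2 =>
    have h := Nat.add_one_mul_choose_eq n k
    have h' : ((n : ℝ) + 1) * (n.choose k : ℝ) = ((n + 1).choose (k + 1) : ℝ) * ((k : ℝ) + 1) := by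
      exact_mod_cast h
    have e : ((n + 2).descFactorial 2 : ℝ) = ((n : ℝ) + 2) * ((n : ℝ) + 1) := by
      simp [Nat.descFactorial]; ring
    rw [e]
    simp only [binP, show n + 2 - 1 = n + 1 by omega, show n + 2 - 2 = n by omega,
      show n + 1 - (k + 1) = n - k by omega]
    push_cast
    rw [pow_succ]
    linear_combination -((n : ℝ) + 2) * q (n + 2) ^ k * q (n + 2) * (1 - q (n + 2)) ^ (n - k) * p (n + 2) * h'

/-- **Theorem 2, eq. (5)** (Bloznelis–Karjalainen–Leskelä). Under the power-law layer type
distribution `P(dx,dy) = p(dx) δ_{q(x)}(dy)` with `p(x) = (a+o(1)) x^{-α}` and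
`q(x) = min{1, b x^{-β}}`, the marginal of the limiting bidegree distribution satisfies
`P(D₁* = t) = (1+o(1)) c' t^{-(α-2)/(1-β)}` with
`c' = a b^{(α-2)/(1-β)} (1-β)⁻¹ P₂₁⁻¹`. -/
theorem barf2_marginal_tail
    (mu a b α β : ℝ) (hmu : 0 < mu) (ha : 0 < a) (hb : 0 < b)
    (hα : 2 < α) (hβ0 : 0 ≤ β) (hβ1 : β < 1) (hαβ : 3 < α + β)
    (hb1 : β = 0 → b < 1)
    (p : ℕ → ℝ) (hpnn : ∀ x, 0 ≤ p x) (hpsum : HasSum p 1)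
    (hptail : Tendsto (fun x : ℕ => p x * (x : ℝ) ^ α) atTop (𝓝 a))
    (q : ℕ → ℝ) (hq : ∀ x : ℕ, q x = min 1 (b * (x : ℝ) ^ (-β))) :
    Tendsto (fun t : ℕ => (∑' u : ℕ, barf2 mu p q t u) * (t : ℝ) ^ ((α - 2) / (1 - β)))
      atTop (𝓝 (a * b ^ ((α - 2) / (1 - β)) * (1 - β)⁻¹ * (mom p q 2 1)⁻¹)) := by
  have hκ : 0 < 1 - β := by linarith
  have hγ1 : 1 < (α - 2) / (1 - β) := by rw [lt_div_iff₀ hκ]; linarith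
  obtain ⟨γ, hγd⟩ : ∃ γ, γ = (α - 2) / (1 - β) := ⟨_, rfl⟩
  have hγκ : (1 - β) * γ = α - 2 := by rw [hγd]; field_simp
  rw [← hγd] at hγ1 ⊢
  have hγ : 0 < γ := by linarith
  have hq0 : ∀ x, 0 ≤ q x := fun x => by
    rw [hq]; exact le_min zero_le_one (by positivity)
  have hq1 : ∀ x, q x ≤ 1 := fun x => by rw [hq]; exact min_le_left _ _
  have hqQ : ∀ n, q (n + 2) = Qf b β n := fun n => by
    rw [hq]; unfold Qf; push_cast; rfl
  -- summability
  have hs1 : Summable (fun x : ℕ => (x : ℝ) * p x) := by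
    simpa using summable_pow_p (e := 1) (by linarith) p hptail
  have hc2nn : ∀ x : ℕ, 0 ≤ (x.descFactorial 2 : ℝ) * q x * p x := fun x =>
    mul_nonneg (mul_nonneg (by positivity) (hq0 x)) (hpnn x)
  have hs2 : Summable (fun x : ℕ => (x.descFactorial 2 : ℝ) * q x * p x) := by
    refine Summable.of_nonneg_of_le hc2nn (fun x => ?_)
      ((summable_pow_p (e := 2 - β) (by linarith) p hptail).mul_left b)
    rcases Nat.eq_zero_or_pos x with rfl | hx
    · simp only [Nat.zero_descFactorial_succ, Nat.cast_zero, zero_mul]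
      have := hpnn 0
      positivity
    · have hx' : (0 : ℝ) < x := by exact_mod_cast hx
      have h1 : (x.descFactorial 2 : ℝ) ≤ (x : ℝ) ^ 2 := by
        exact_mod_cast Nat.descFactorial_le_pow x 2
      have h2 : q x ≤ b * (x : ℝ) ^ (-β) := by rw [hq]; exact min_le_right _ _
      have h3 : (x : ℝ) ^ (2 - β) = (x : ℝ) ^ 2 * (x : ℝ) ^ (-β) := by
        rw [sub_eq_add_neg, Real.rpow_add hx']; norm_num
      rw [h3]
      calc _ ≤ (x : ℝ) ^ 2 * (b * (x : ℝ) ^ (-β)) * p x := by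
            have := hpnn x
            have := hq0 x
            gcongr
        _ = _ := by ring
  -- positivity of moments
  obtain ⟨x0, hx0, hpx0⟩ : ∃ n : ℕ, 0 ≤ n ∧ 0 < p (n + 2) := by
    have h1 := hptail.eventually_const_lt ha
    obtain ⟨n, hn, hn2⟩ := (h1.and (eventually_ge_atTop 2)).exists
    refine ⟨n - 2, by omega, ?_⟩
    rw [show n - 2 + 2 = n by omega]
    exact pos_of_mul_pos_left hn (by positivity)
  have hmom10 : mom p q 1 0 = ∑' x : ℕ, (x : ℝ) * p x := by simp [mom]
  have hmom21 : mom p q 2 1 = ∑' x : ℕ, (x.descFactorial 2 : ℝ) * q x * p x := by simp [mom]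
  have hm10 : 0 < mom p q 1 0 := by
    rw [hmom10]
    refine hs1.tsum_pos (fun x => mul_nonneg (by positivity) (hpnn x)) (x0 + 2) ?_
    positivity
  have hm21 : 0 < mom p q 2 1 := by
    rw [hmom21]
    refine hs2.tsum_pos hc2nn (x0 + 2) ?_
    rw [hqQ]
    have h1 := Qf_pos hb β x0
    have h2 : 0 < (x0 + 2).descFactorial 2 := Nat.descFactorial_pos.2 (by omega)
    positivity
  have hBnn : ∀ x y s, 0 ≤ binP (x - y) (q x) s := fun x y s => binP_nonneg _ (hq0 x) (hq1 x) s
  -- g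
  have hgnn : ∀ s, 0 ≤ gInc p q s := fun s =>
    div_nonneg (tsum_nonneg fun x => mul_nonneg (mul_nonneg (by positivity) (hBnn x 1 s)) (hpnn x))
      hm10.le
  have hgsum : HasSum (gInc p q) 1 := by
    have h1 := tonelli (c := fun x : ℕ => (x : ℝ) * p x) (k := fun x s => binP (x - 1) (q x) s)
      (fun x => mul_nonneg (by positivity) (hpnn x)) hs1 (fun x s => hBnn x 1 s)
      (fun x => binP_hasSum _ _)
    have h2 := h1.div_const (mom p q 1 0)
    rw [← hmom10, div_self hm10.ne'] at h2
    refine h2.congr_fun fun s => ?_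
    unfold gInc
    congr 1
    exact tsum_congr fun x => by ring
  -- H
  have hHnn : ∀ s, 0 ≤ Hs p q s := fun s => tsum_nonneg fun x => mul_nonneg (hc2nn x) (hBnn x 2 s)
  have hHsum : HasSum (fun s => Hs p q s / mom p q 2 1) 1 := by
    have h1 := (tonelli (k := fun x s => binP (x - 2) (q x) s) hc2nn hs2 (fun x s => hBnn x 2 s)
      (fun x => binP_hasSum _ _)).div_const (mom p q 2 1)
    rw [← hmom21, div_self hm21.ne'] at h1
    exact h1
  have hHs : ∀ s, Summable (fun x : ℕ => ((x.descFactorial 2 : ℝ) * q x * p x) * binP (x - 2) (q x) s) :=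
    fun s => Summable.of_nonneg_of_le (fun x => mul_nonneg (hc2nn x) (hBnn x 2 s))
      (fun x => mul_le_of_le_one_right (hc2nn x) (binP_le_one _ (hq0 x) (hq1 x) s)) hs2
  have hdf : ∀ n : ℕ, ((n + 2).descFactorial 2 : ℝ) = ((n : ℝ) + 2) * ((n : ℝ) + 1) := by
    intro n; simp [Nat.descFactorial]; ring
  have hHtail : Tendsto (fun t : ℕ => Hs p q t * (t : ℝ) ^ γ) atTop
      (𝓝 (a * b ^ γ / (1 - β))) := by
    have h1 := core (A := a * b ^ γ) hb hβ0 hβ1 hb1 hγ (by positivity)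
      (fun n => ((n : ℝ) + 2) * ((n : ℝ) + 1) * p (n + 2))
      (fun n => mul_nonneg (by positivity) (hpnn _)) ?_ ?_
    · refine h1.congr fun t => ?_
      congr 1
      unfold Hs
      rw [← (hHs t).sum_add_tsum_nat_add 2]
      simp only [Finset.sum_range_succ, Finset.sum_range_zero]
      simp only [hdf, hqQ, Nat.add_sub_cancel]
      simp [Nat.descFactorial]
      exact tsum_congr fun n => by ring
    · have h2 : Tendsto (fun n : ℕ => ((n : ℝ) + 1) / ((n : ℝ) + 2)) atTop (𝓝 1) := by
        have := (tendsto_n2.inv_tendsto_atTop).const_sub 1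
        rw [sub_zero] at this
        refine this.congr fun n => ?_
        simp; field_simp; ring
      have h3 : Tendsto (fun n : ℕ => p (n + 2) * ((n + 2 : ℕ) : ℝ) ^ α) atTop (𝓝 a) :=
        hptail.comp (tendsto_add_atTop_nat 2)
      have h4 := (h3.mul_const (b ^ γ)).mul h2
      rw [mul_one] at h4
      refine h4.congr fun n => ?_
      unfold mf
      have hx : (0 : ℝ) < (n : ℝ) + 2 := by positivity
      rw [Real.mul_rpow hb.le (by positivity), ← Real.rpow_mul hx.le, hγκ,
        Real.rpow_sub hx]
      push_cast
      norm_num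
      field_simp
    · have h2 := (summable_nat_add_iff 2).2 hs2
      refine h2.congr fun n => ?_
      simp only [hdf, hqQ]; ring
  -- bound for g
  obtain ⟨K, hK⟩ : ∃ K : ℝ, ∀ s, gInc p q s ≤ K * wgt (γ + 1) s := by
    obtain ⟨C, hC⟩ := hHtail.bddAbove_range
    have hC' : ∀ t : ℕ, Hs p q t * (t : ℝ) ^ γ ≤ C := fun t => hC ⟨t, rfl⟩
    have hg1 : ∀ s, gInc p q s ≤ 1 := fun s => le_hasSum hgsum s fun j _ => hgnn j
    refine ⟨max ((2 : ℝ) ^ (γ + 1)) (2 * 3 ^ γ * C / mom p q 1 0), fun s => ?_⟩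
    have hw : wgt (γ + 1) s = ((1 + (s : ℝ)) ^ (γ + 1))⁻¹ := by
      unfold wgt; rw [Real.rpow_neg (by positivity)]
    rw [hw, ← div_eq_mul_inv, le_div_iff₀ (by positivity)]
    by_cases hs : s ≤ 1
    · refine le_trans ?_ (le_max_left _ _)
      have hs' : (s : ℝ) ≤ 1 := by exact_mod_cast hs
      calc _ ≤ 1 * (1 + (s : ℝ)) ^ (γ + 1) := by gcongr; exact hg1 s
        _ ≤ _ := by
          rw [one_mul]; gcongr; linarith
    · refine le_trans ?_ (le_max_right _ _)
      obtain ⟨k, rfl⟩ : ∃ k, s = k + 1 := ⟨s - 1, by omega⟩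
      have hk : (1 : ℝ) ≤ k := by exact_mod_cast (by omega : 1 ≤ k)
      rw [gInc_rel q p k hm10.ne', Real.rpow_add (by positivity), Real.rpow_one]
      have h3 : (1 + ((k + 1 : ℕ) : ℝ)) ^ γ ≤ 3 ^ γ * (k : ℝ) ^ γ := by
        rw [← Real.mul_rpow (by norm_num) (by positivity)]
        gcongr
        push_cast; linarith
      have h4 : (1 + ((k + 1 : ℕ) : ℝ)) ≤ 2 * ((k : ℝ) + 1) := by push_cast; linarith
      have hH := hHnn k
      calc _ ≤ Hs p q k / mom p q 1 0 / ((k : ℝ) + 1) * (3 ^ γ * (k : ℝ) ^ γ * (2 * ((k : ℝ) + 1))) := by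
            gcongr
        _ = 2 * 3 ^ γ * (Hs p q k * (k : ℝ) ^ γ) / mom p q 1 0 := by field_simp
        _ ≤ _ := by gcongr; exact hC' k
  -- barf1
  have hlam : 0 ≤ mu * mom p q 1 0 := by positivity
  have hf1nn : ∀ s, 0 ≤ barf1 mu p q s := fun s => cpoi_nonneg hlam hgnn s
  have hf1sum : HasSum (barf1 mu p q) 1 := cpoi_hasSum hlam hgnn hgsum
  have hf1tail : Tendsto (fun t : ℕ => barf1 mu p q t * (t : ℝ) ^ γ) atTop (𝓝 0) :=
    cpoi_tail hlam hγ hgnn hK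
  -- delta
  have hdnn : ∀ s t, 0 ≤ delta11 s t := fun s t => by unfold delta11; split_ifs <;> norm_num
  have hdsum : ∀ s, HasSum (delta11 s) (if s = 1 then (1 : ℝ) else 0) := by
    intro s
    by_cases h : s = 1
    · have e : delta11 s = fun t => if t = 1 then (1 : ℝ) else 0 := by
        funext t; simp [delta11, h]
      rw [e, if_pos h]; exact hasSum_ite_eq 1 1
    · have e : delta11 s = fun t => (0 : ℝ) := by
        funext t; simp [delta11, h]
      rw [e, if_neg h]; exact hasSum_zero
  have hd1nn : ∀ s : ℕ, 0 ≤ (if s = 1 then (1 : ℝ) else 0) := fun s => by split_ifs <;> norm_num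
  have hd1sum : HasSum (fun s : ℕ => if s = 1 then (1 : ℝ) else 0) 1 := hasSum_ite_eq 1 1
  have hd1tail : Tendsto (fun t : ℕ => (if t = 1 then (1 : ℝ) else 0) * (t : ℝ) ^ γ) atTop (𝓝 0) := by
    refine tendsto_const_nhds.congr' ?_
    filter_upwards [eventually_gt_atTop 1] with t ht
    rw [if_neg (by omega), zero_mul]
  -- f2p
  have hf2nn : ∀ s t, 0 ≤ f2p p q s t := fun s t =>
    div_nonneg (tsum_nonneg fun x => mul_nonneg (mul_nonneg (mul_nonneg (mul_nonneg (by positivity)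
      (hq0 x)) (hBnn x 2 s)) (hBnn x 2 t)) (hpnn x)) hm21.le
  have hf2sum : ∀ s, HasSum (f2p p q s) (Hs p q s / mom p q 2 1) := by
    intro s
    have h1 := (tonelli (k := fun x t => binP (x - 2) (q x) t)
      (fun x => mul_nonneg (hc2nn x) (hBnn x 2 s)) (hHs s) (fun x t => hBnn x 2 t)
      (fun x => binP_hasSum _ _)).div_const (mom p q 2 1)
    refine h1.congr_fun fun t => ?_
    unfold f2p
    congr 1
    exact tsum_congr fun x => by ring
  have hinner := fun s => hasSum_conv2 (G := fun s t => barf1 mu p q s * barf1 mu p q t)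
    (G1 := barf1 mu p q) hdnn (fun i j => mul_nonneg (hf1nn i) (hf1nn j)) hdsum
    (fun i => by simpa using hf1sum.mul_left (barf1 mu p q i)) s
  have houter := fun s => hasSum_conv2 (conv2_nonneg hdnn
    (fun i j => mul_nonneg (hf1nn i) (hf1nn j))) hf2nn hinner hf2sum s
  have hE := conv_tail hγ hd1nn hd1sum hf1nn hf1sum hd1tail hf1tail
  have hEsum := hasSum_conv hd1nn hf1nn hd1sum hf1sum
  have hhtail : Tendsto (fun t : ℕ => Hs p q t / mom p q 2 1 * (t : ℝ) ^ γ) atTop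
      (𝓝 (a * b ^ γ / (1 - β) / mom p q 2 1)) := by
    refine (hHtail.div_const (mom p q 2 1)).congr fun t => by ring
  have hfin := conv_tail hγ (conv_nonneg hd1nn hf1nn) hEsum
    (fun s => div_nonneg (hHnn s) hm21.le) hHsum hE hhtail
  have e1 : a * b ^ γ / (1 - β) / mom p q 2 1 * (1 * 1) + (0 * 1 + 0 * 1) * 1 =
      a * b ^ γ * (1 - β)⁻¹ * (mom p q 2 1)⁻¹ := by
    simp [div_eq_mul_inv]
  rw [e1] at hfin
  refine hfin.congr fun t => ?_
  rw [show (∑' u : ℕ, barf2 mu p q t u) = _ from (houter t).tsum_eq]
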